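/- arXiv:1109.2924 — 2 statements merged into one kernel-verified Lean document; each statement's English description precedes it below -/
import Mathlib

section
/- Let k be an algebraically closed field, D a k-linear triangulated category with finite-dimensional Hom spaces, and H a finite heart of a bounded t-structure on D with simple objects S_1, …, S_n. Suppose P_1, …, P_n are projectives of H with dim_k Hom(P_i, S_j) = δ_{ij}. Let A = End(P_1 ⊕ … ⊕ P_n), let J be the Jacobson radical of A, and let e_i ∈ A be the idempotent given by projection onto the summand P_i. Then for all i, j there is a k-linear isomorphism e_j (J/J²) e_i ≅ Ext^1(S_j, S_i)^*; that is, the space Irr(P_i, P_j) of irreducible maps P_i → P_j in the additive subcategory generated by P_1, …, P_n is dual to Ext^1(S_j, S_i). -/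
open CategoryTheory Category Limits Pretriangulated ZeroObject

universe v u

namespace Paper

variable (C : Type u) [Category.{v} C] [HasZeroObject C] [HasShift C ℤ]
  [Preadditive C] [∀ n : ℤ, (shiftFunctor C n).Additive] [Pretriangulated C]

/-- The right perpendicular of a set of objects: objects receiving no nonzero
morphism from the set. -/
def perp (P : Set C) : Set C := {G | ∀ F ∈ P, ∀ f : F ⟶ G, f = 0}

/-- A bounded t-structure on a (pre)triangulated category, given by its aisle `P`. -/
structure TStr where
  P : Set C
  /-- `P` is closed under direct summands (hence under isomorphism). -/
  summand : ∀ (X Y : C) (i : Y ⟶ X) (r : X ⟶ Y), i ≫ r = 𝟙 Y → X ∈ P → Y ∈ P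
  /-- `P[1] ⊆ P`. -/
  shift_mem : ∀ X ∈ P, X⟦(1 : ℤ)⟧ ∈ P
  /-- Every object fits in a triangle `F → E → G → F[1]` with `F ∈ P` and `G ∈ P^⊥`. -/
  exists_triangle : ∀ E : C, ∃ (F G : C) (f : F ⟶ E) (g : E ⟶ G) (h : G ⟶ F⟦(1 : ℤ)⟧),
    F ∈ P ∧ G ∈ perp C P ∧ Triangle.mk f g h ∈ distTriang C
  /-- `M[k] ∈ P` for `k ≫ 0`. -/
  bounded_above : ∀ M : C, ∃ a : ℤ, ∀ j : ℤ, a ≤ j → M⟦j⟧ ∈ P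
  /-- `M[k] ∈ P^⊥` for `k ≪ 0`. -/
  bounded_below : ∀ M : C, ∃ b : ℤ, ∀ j : ℤ, j ≤ b → M⟦j⟧ ∈ perp C P

/-- The heart `H = P^⊥[1] ∩ P` of a bounded t-structure. -/
def heart (T : TStr C) : Set C := {X | X ∈ T.P ∧ X⟦(-1 : ℤ)⟧ ∈ perp C T.P}

/-- The shift `S[m]` of a set of objects. -/
def shiftSet (S : Set C) (m : ℤ) : Set C := {X | X⟦(-m : ℤ)⟧ ∈ S}

/-- An object `P` is a projective of a heart if `Hom(P, M[k]) = 0` for all `k ≠ 0`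
and all `M` in the heart. -/
def IsProjOf (T : TStr C) (P : C) : Prop :=
  ∀ (k : ℤ), k ≠ 0 → ∀ M ∈ heart C T, ∀ f : P ⟶ M⟦k⟧, f = 0

/-- A filtration of an object `M` by triangles with factors in the heart, shifted by a
strictly decreasing sequence of degrees: the canonical filtration associated to a bounded
t-structure. -/
structure HeartFiltration (T : TStr C) (M : C) where
  n : ℕ
  obj : ℕ → C
  deg : ℕ → ℤ
  factor : ℕ → C
  zero : IsZero (obj 0)
  top : obj n ≅ M
  mem : ∀ i, 1 ≤ i → i ≤ n → factor i ∈ heart C T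
  strict : ∀ i j, 1 ≤ i → i < j → j ≤ n → deg j < deg i
  tri : ∀ i, 1 ≤ i → i ≤ n →
    ∃ (f : obj (i - 1) ⟶ obj i) (g : obj i ⟶ (factor i)⟦deg i⟧)
      (h : (factor i)⟦deg i⟧ ⟶ (obj (i - 1))⟦(1 : ℤ)⟧),
      Triangle.mk f g h ∈ distTriang C

variable {C}

open Classical in
/-- The homology `H^k(M)` of `M` with respect to the heart, read off from a
filtration: the factor in degree `k` if there is one, and `0` otherwise. -/
noncomputable def HeartFiltration.homologyAt {T : TStr C} {M : C}
    (F : HeartFiltration C T M) (k : ℤ) : C :=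
  if h : ∃ i, 1 ≤ i ∧ i ≤ F.n ∧ F.deg i = k then F.factor h.choose else 0

variable (C)

/-- A torsion pair `⟨F, T⟩` in the heart of a bounded t-structure: `Hom(T, F) = 0` and
every object of the heart is an extension (triangle) of an `F`-object by a `T`-object. -/
structure TorsionPairIn (T : TStr C) where
  free : Set C
  tor : Set C
  free_sub : free ⊆ heart C T
  tor_sub : tor ⊆ heart C T
  hom_zero : ∀ X ∈ tor, ∀ Y ∈ free, ∀ f : X ⟶ Y, f = 0
  exists_ses : ∀ E ∈ heart C T, ∃ (A B : C) (f : A ⟶ E) (g : E ⟶ B) (h : B ⟶ A⟦(1 : ℤ)⟧),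
    A ∈ tor ∧ B ∈ free ∧ Triangle.mk f g h ∈ distTriang C

/-- The forward tilt `H^♯` of the heart at a torsion pair `⟨free, tor⟩`:
objects `E` with `H^1(E) ∈ F`, `H^0(E) ∈ T` and `H^i(E) = 0` otherwise. -/
def tiltSharpSet (T : TStr C) (free tor : Set C) : Set C :=
  {E | ∀ (F : HeartFiltration C T E) (i : ℕ), 1 ≤ i → i ≤ F.n →
    IsZero (F.factor i) ∨ (F.deg i = 1 ∧ F.factor i ∈ free) ∨
      (F.deg i = 0 ∧ F.factor i ∈ tor)}

/-- The backward tilt `H^♭` of the heart at a torsion pair `⟨free, tor⟩`: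
objects `E` with `H^0(E) ∈ F`, `H^{-1}(E) ∈ T` and `H^i(E) = 0` otherwise. -/
def tiltFlatSet (T : TStr C) (free tor : Set C) : Set C :=
  {E | ∀ (F : HeartFiltration C T E) (i : ℕ), 1 ≤ i → i ≤ F.n →
    IsZero (F.factor i) ∨ (F.deg i = 0 ∧ F.factor i ∈ free) ∨
      (F.deg i = -1 ∧ F.factor i ∈ tor)}

/-- Simple objects of a heart (or of any full subcategory closed under the abelian
structure): nonzero objects which are not the middle term of a nontrivial short exact
sequence (triangle) in the heart. -/
def IsSimpleIn (H : Set C) (X : C) : Prop :=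
  X ∈ H ∧ ¬ IsZero X ∧ ∀ (A B : C) (f : A ⟶ X) (g : X ⟶ B) (h : B ⟶ A⟦(1 : ℤ)⟧),
    A ∈ H → B ∈ H → Triangle.mk f g h ∈ (distTriang C) → IsZero A ∨ IsZero B

/-- A heart is finite if it has finitely many simples up to isomorphism and every object
is a finite iterated extension of simple objects. -/
def FiniteHeart (T : TStr C) : Prop :=
  (∃ (n : ℕ) (S : Fin n → C), (∀ i, IsSimpleIn C (heart C T) (S i)) ∧
    ∀ X, IsSimpleIn C (heart C T) X → ∃ i, Nonempty (X ≅ S i)) ∧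
  ∀ M ∈ heart C T, ∃ (m : ℕ) (obj : ℕ → C), IsZero (obj 0) ∧ Nonempty (obj m ≅ M) ∧
    ∀ i < m, ∃ (s : C) (f : obj i ⟶ obj (i + 1)) (g : obj (i + 1) ⟶ s)
      (h : s ⟶ (obj i)⟦(1 : ℤ)⟧),
      IsSimpleIn C (heart C T) s ∧ Triangle.mk f g h ∈ distTriang C

section Biproducts

variable [HasFiniteBiproducts C]

/-- Finite direct sums of copies of an object `S`. -/
def addObj (S : C) : Set C := {M | ∃ n : ℕ, Nonempty (M ≅ ⨁ (fun _ : Fin n => S))}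

/-- The simple forward tilt `H^♯_S` of the heart at a rigid simple `S`: the forward tilt
at the torsion pair whose free part consists of finite direct sums of copies of `S`. -/
def simpleSharpSet (T : TStr C) (S : C) : Set C :=
  tiltSharpSet C T (addObj C S) {M | M ∈ heart C T ∧ ∀ f : M ⟶ S, f = 0}

/-- The simple backward tilt `H^♭_S` of the heart at a rigid simple `S`: the backward
tilt at the torsion pair whose torsion part consists of finite direct sums of copies
of `S`. -/
def simpleFlatSet (T : TStr C) (S : C) : Set C :=
  tiltFlatSet C T {M | M ∈ heart C T ∧ ∀ f : S ⟶ M, f = 0} (addObj C S)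

end Biproducts

/-- The radical morphisms from `X` to `Y`: `f` with `𝟙 X - f ≫ g` invertible for every
`g : Y ⟶ X`.  Under the identification `Hom(P_i, P_j) = e_j A e_i` for
`A = End(P_1 ⊕ … ⊕ P_n)`, with `e_i` the idempotent projecting onto `P_i`, this is
`e_j J e_i` where `J` is the Jacobson radical of `A`. -/
def radSet (X Y : C) : Set (X ⟶ Y) := {f | ∀ g : Y ⟶ X, IsIso (𝟙 X - f ≫ g)}

section Linear

variable (k : Type*) [Field k] [Linear k C]

/-- `e_j J e_i` as a `k`-subspace of `Hom(P_i, P_j)` (the span of the radical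
morphisms, which is the set of radical morphisms itself). -/
def radMod (X Y : C) : Submodule k (X ⟶ Y) := Submodule.span k (radSet C X Y)

/-- Composites of two radical morphisms through some `P l`; the span of these is
`e_j J² e_i`. -/
def radSqSet (n : ℕ) (P : Fin n → C) (i j : Fin n) : Set (P i ⟶ P j) :=
  {f | ∃ (l : Fin n) (u : P i ⟶ P l) (v : P l ⟶ P j),
    u ∈ radSet C (P i) (P l) ∧ v ∈ radSet C (P l) (P j) ∧ f = u ≫ v}

/-- `e_j J² e_i` as a `k`-subspace of `Hom(P_i, P_j)`. -/
def radSqMod (n : ℕ) (P : Fin n → C) (i j : Fin n) : Submodule k (P i ⟶ P j) :=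
  Submodule.span k (radSqSet C n P i j)

/-- The space `Irr(P_i, P_j) = e_j (J/J²) e_i` of irreducible maps `P_i → P_j` in the
additive subcategory generated by `P_1, …, P_n`: the quotient
`(e_j J e_i) / (e_j J² e_i)`, which is canonically identified with `e_j (J/J²) e_i`. -/
abbrev IrrSpace (n : ℕ) (P : Fin n → C) (i j : Fin n) :=
  ↥(radMod C k (P i) (P j)) ⧸
    Submodule.comap (radMod C k (P i) (P j)).subtype (radSqMod C k n P i j)

end Linear

/-!
Complete the covering morphism `p j : P j ⟶ S j` to a triangle `K → P j → S j → K[1]`, so that `K`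
is the radical of `P j`.  Every object in degrees `≤ 0` can be covered by sums of the `P l`, which
makes `Hom(P i, K) × Hom(K, S i) → Hom(P i, S i) = k` a pairing inducing a surjection
`Hom(P i, K) → Hom(K, S i)^*`.  Composition with `K → P j` identifies `Hom(P i, K)` with the radical
morphisms `P i ⟶ P j`, and the kernel of the surjection with the span of the composites of two
radical morphisms; hence `Irr(P i, P j) ≅ Hom(K, S i)^*`.  As `P j` is projective, the connecting
map `Hom(K, S i) → Hom(S j, (S i)[1])` is bijective.  As the shift functor is not assumed to be
`k`-linear, the ring `End((S i)[1]) ≅ End(S i) = k` need not be one-dimensional over `k` in general.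
When it is, in particular over an algebraically closed field, this bijection is semilinear with
respect to a bijection of `k`, which is enough to compare dimensions.
-/

section OneDimensionalEnd

variable {k : Type*} [Field k] {D E : Type*} [Category D] [Preadditive D] [Linear k D]
  [Category E] [Preadditive E] [Linear k E] {X : D}

lemma id_ne_zero_of_finrank_end_eq_one (hX : Module.finrank k (X ⟶ X) = 1) : 𝟙 X ≠ 0 := by
  intro h
  have := Module.nontrivial_of_finrank_eq_succ hX
  obtain ⟨f, hf⟩ := exists_ne (0 : X ⟶ X)
  exact hf (((IsZero.iff_id_eq_zero X).2 h).eq_of_src f 0)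

lemma bijective_smul_id_of_finrank_end_eq_one (hX : Module.finrank k (X ⟶ X) = 1) :
    Function.Bijective fun a : k ↦ a • 𝟙 X := by
  have hid := id_ne_zero_of_finrank_end_eq_one hX
  exact ⟨smul_left_injective k hid, (finrank_eq_one_iff_of_nonzero' _ hid).1 hX⟩

lemma isIso_iff_ne_zero_of_finrank_end_eq_one (hX : Module.finrank k (X ⟶ X) = 1) (f : X ⟶ X) :
    IsIso f ↔ f ≠ 0 := by
  have hid := id_ne_zero_of_finrank_end_eq_one hX
  refine ⟨?_, fun hf ↦ ?_⟩
  · rintro hf rfl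
    exact hid (isIsoZeroSelfEquiv X hf)
  · obtain ⟨a, rfl⟩ := (bijective_smul_id_of_finrank_end_eq_one hX).2 f
    have ha : a ≠ 0 := left_ne_zero_of_smul hf
    exact ⟨a⁻¹ • 𝟙 X, by simp [smul_smul, ha], by simp [smul_smul, ha]⟩

variable (F : D ⥤ E) [F.Full] [F.Faithful]

lemma finrank_end_map_eq_one [IsAlgClosed k] [F.PreservesZeroMorphisms]
    [FiniteDimensional k (F.obj X ⟶ F.obj X)] (hX : Module.finrank k (X ⟶ X) = 1) :
    Module.finrank k (F.obj X ⟶ F.obj X) = 1 :=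
  finrank_endomorphism_eq_one k fun f ↦ by
    obtain ⟨f, rfl⟩ := F.map_surjective f
    rw [isIso_iff_of_reflects_iso, isIso_iff_ne_zero_of_finrank_end_eq_one hX, Ne, Ne,
      F.map_eq_zero_iff]

lemma exists_equiv_map_smul (hX : Module.finrank k (X ⟶ X) = 1)
    (hFX : Module.finrank k (F.obj X ⟶ F.obj X) = 1) :
    ∃ σ : k ≃ k, ∀ (W : D) (a : k) (f : W ⟶ X), F.map (a • f) = σ a • F.map f := by
  let scalar := Equiv.ofBijective _ (bijective_smul_id_of_finrank_end_eq_one hX)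
  let scalarF := Equiv.ofBijective _ (bijective_smul_id_of_finrank_end_eq_one hFX)
  let mapEquiv : (X ⟶ X) ≃ (F.obj X ⟶ F.obj X) := Equiv.ofBijective F.map
    ⟨F.map_injective, F.map_surjective⟩
  refine ⟨(scalar.trans mapEquiv).trans scalarF.symm, fun W a f ↦ ?_⟩
  have hσ : F.map (a • 𝟙 X) = scalarF.symm (F.map (a • 𝟙 X)) • 𝟙 (F.obj X) :=
    (scalarF.apply_symm_apply _).symm
  calc F.map (a • f) = F.map f ≫ F.map (a • 𝟙 X) := by
        rw [← F.map_comp, Linear.comp_smul, comp_id]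
    _ = scalarF.symm (F.map (a • 𝟙 X)) • F.map f := by
        rw [hσ, Linear.comp_smul, comp_id, ← hσ]

end OneDimensionalEnd

section Perpendicular

variable {D : Type*} [Category D] [Preadditive D] {P : Set D} {X Y : D}

lemma perp_of_iso (e : X ≅ Y) (hX : X ∈ perp D P) : Y ∈ perp D P := by
  intro F hF f
  rw [← cancel_mono e.inv, zero_comp]
  exact hX F hF _

lemma perp_shift_neg_one [HasShift D ℤ] [(shiftFunctor D (1 : ℤ)).Additive]
    (hP : ∀ X ∈ P, X⟦(1 : ℤ)⟧ ∈ P) (hX : X ∈ perp D P) : X⟦(-1 : ℤ)⟧ ∈ perp D P := by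
  intro F hF f
  apply (shiftFunctor D (1 : ℤ)).map_injective
  let e : (X⟦(-1 : ℤ)⟧)⟦(1 : ℤ)⟧ ≅ X := (shiftFunctorCompIsoId D (-1 : ℤ) 1 (by lia)).app X
  rw [Functor.map_zero, ← cancel_mono e.hom, zero_comp]
  exact hX _ (hP F hF) _

end Perpendicular

section DistinguishedTriangles

variable {C} {X Y Z : C} {f : X ⟶ Y} {g : Y ⟶ Z} {h : Z ⟶ X⟦(1 : ℤ)⟧}

lemma eq_zero_of_comp_mor₁_eq_zero (hT : Triangle.mk f g h ∈ distTriang C) {W : C}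
    (hW : ∀ y : W ⟶ Z⟦(-1 : ℤ)⟧, y = 0) (x : W ⟶ X) (hx : x ≫ f = 0) : x = 0 := by
  obtain ⟨y, rfl⟩ : ∃ y : W ⟶ Z⟦(-1 : ℤ)⟧, x = y ≫ (Triangle.mk f g h).invRotate.mor₁ :=
    Triangle.coyoneda_exact₂ _ (inv_rot_of_distTriang _ hT) x hx
  rw [hW y]
  exact zero_comp

lemma bijective_comp_shift_map (hT : Triangle.mk f g h ∈ distTriang C) {W : C}
    (hf : ∀ y : Y ⟶ W, f ≫ y = 0) (hY : ∀ y : Y ⟶ W⟦(1 : ℤ)⟧, y = 0) :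
    Function.Bijective fun x : X ⟶ W ↦ h ≫ x⟦(1 : ℤ)⟧' := by
  constructor
  · intro x x' hxx'
    have hsub : h ≫ (x - x')⟦(1 : ℤ)⟧' = 0 := by
      rw [Functor.map_sub, Preadditive.comp_sub, sub_eq_zero]
      exact hxx'
    obtain ⟨y, hy⟩ : ∃ y : Y⟦(1 : ℤ)⟧ ⟶ W⟦(1 : ℤ)⟧, (x - x')⟦(1 : ℤ)⟧' = (-f⟦(1 : ℤ)⟧') ≫ y :=
      Triangle.yoneda_exact₃ _ (rot_of_distTriang _ hT) _ hsub
    obtain ⟨z, rfl⟩ := (shiftFunctor C (1 : ℤ)).map_surjective y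
    apply sub_eq_zero.1 ((shiftFunctor C (1 : ℤ)).map_injective _)
    rw [hy, Preadditive.neg_comp, ← Functor.map_comp, hf, Functor.map_zero, neg_zero]
  · intro e
    obtain ⟨y, rfl⟩ : ∃ y : X⟦(1 : ℤ)⟧ ⟶ W⟦(1 : ℤ)⟧, e = h ≫ y :=
      Triangle.yoneda_exact₃ _ hT e (hY _)
    obtain ⟨x, rfl⟩ := (shiftFunctor C (1 : ℤ)).map_surjective y
    exact ⟨x, rfl⟩

lemma finrank_hom_eq_finrank_hom_shift {k : Type*} [Field k] [Linear k C]
    (hT : Triangle.mk f g h ∈ distTriang C) {W : C}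
    (hf : ∀ y : Y ⟶ W, f ≫ y = 0) (hY : ∀ y : Y ⟶ W⟦(1 : ℤ)⟧, y = 0)
    (hW : Module.finrank k (W ⟶ W) = 1)
    (hW' : Module.finrank k (W⟦(1 : ℤ)⟧ ⟶ W⟦(1 : ℤ)⟧) = 1) :
    Module.finrank k (X ⟶ W) = Module.finrank k (Z ⟶ W⟦(1 : ℤ)⟧) := by
  obtain ⟨σ, hσ⟩ := exists_equiv_map_smul (shiftFunctor C (1 : ℤ)) hW hW'
  let connecting : (X ⟶ W) →+ (Z ⟶ W⟦(1 : ℤ)⟧) :=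
    AddMonoidHom.mk' (fun x ↦ h ≫ x⟦(1 : ℤ)⟧') (by simp)
  refine congrArg Cardinal.toNat (rank_eq_of_equiv_equiv σ
    (AddEquiv.ofBijective connecting (bijective_comp_shift_map hT hf hY)) σ.bijective fun a x ↦ ?_)
  change h ≫ (a • x)⟦(1 : ℤ)⟧' = σ a • (h ≫ x⟦(1 : ℤ)⟧')
  rw [hσ, Linear.comp_smul]

end DistinguishedTriangles

section TStructures

open Triangulated

variable {C} (t : TStructure C)

section

variable {X Y Z : C} {f : X ⟶ Y} {g : Y ⟶ Z} {h : Z ⟶ X⟦(1 : ℤ)⟧}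

lemma isLE_obj₃ (hT : Triangle.mk f g h ∈ distTriang C) {n : ℤ} (hX : t.IsLE X (n + 1))
    (hY : t.IsLE Y n) : t.IsLE Z n :=
  t.isLE₂ _ (rot_of_distTriang _ hT) n hY (t.isLE_shift X (n + 1) 1 n)

lemma isGE_obj₁ (hT : Triangle.mk f g h ∈ distTriang C) {n : ℤ} (hY : t.IsGE Y n)
    (hZ : t.IsGE Z (n - 1)) : t.IsGE X n :=
  t.isGE₂ _ (inv_rot_of_distTriang _ hT) n (t.isGE_shift Z (n - 1) (-1) n) hY

lemma eq_zero_of_comp_mor₂_eq_zero (hT : Triangle.mk f g h ∈ distTriang C) {n : ℤ}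
    (hX : t.IsLE X n) {W : C} (hW : t.IsGE W n) (x : Z ⟶ W) (hx : g ≫ x = 0) : x = 0 := by
  obtain ⟨y, rfl⟩ : ∃ y : X⟦(1 : ℤ)⟧ ⟶ W, x = h ≫ y := Triangle.yoneda_exact₃ _ hT x hx
  rw [t.zero_of_isLE_of_isGE y (n - 1) n (by lia) (t.isLE_shift X n 1 (n - 1)) hW, comp_zero]

lemma isLE_obj₁ (hT : Triangle.mk f g h ∈ distTriang C) {n : ℤ} (hY : t.IsLE Y n)
    (hg : ∀ W : C, t.IsGE W n → ∀ x : Z ⟶ W, g ≫ x = 0 → x = 0) : t.IsLE X n := by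
  rw [← t.isLE_shift_iff X n 1 (n - 1), t.isLE_iff_orthogonal (n - 1) n (by lia)]
  intro W y hW
  have hgh : g ≫ h = 0 := comp_distTriang_mor_zero₂₃ _ hT
  have hhy : h ≫ y = 0 := hg W hW _ (by rw [← assoc, hgh, zero_comp])
  exact eq_zero_of_comp_mor₂_eq_zero t (rot_of_distTriang _ hT) hY hW y hhy

end

lemma hom_eq_zero_of_hom_pure_eq_zero {Z : C} {a b : ℤ} (hab : a ≤ b)
    (hZ : ∀ m ∈ Set.Icc a b, ∀ Y : C, t.IsLE Y m → t.IsGE Y m → ∀ f : Z ⟶ Y, f = 0)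
    {Y : C} (hYa : t.IsGE Y a) (hYb : t.IsLE Y b) (f : Z ⟶ Y) : f = 0 := by
  induction b, hab using Int.leInduction generalizing Y with
  | base => exact hZ a (Set.left_mem_Icc.2 le_rfl) Y hYb hYa f
  | succ b hab ih =>
    obtain ⟨X, G, hX, hG, x, g, h, hT⟩ := t.exists_triangle Y b (b + 1) rfl
    have hXb : t.IsLE X b := ⟨hX⟩
    have hGb : t.IsGE G (b + 1) := ⟨hG⟩
    have hGb' : t.IsLE G (b + 1) := isLE_obj₃ t hT (t.isLE_of_le X b _) hYb
    have hXa : t.IsGE X a := isGE_obj₁ t hT hYa (t.isGE_of_ge G (a - 1) (b + 1))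
    obtain ⟨f', rfl⟩ : ∃ f' : Z ⟶ X, f = f' ≫ x :=
      Triangle.coyoneda_exact₂ _ hT f (hZ (b + 1) ⟨by lia, le_rfl⟩ G hGb' hGb _)
    rw [ih (fun m hm ↦ hZ m ⟨hm.1, by linarith [hm.2]⟩) hXa hXb f', zero_comp]

lemma isLE_sub_one_of_hom_pure_eq_zero {Z : C} {n : ℤ} (hZ : t.IsLE Z n)
    (hpure : ∀ Y : C, t.IsLE Y n → t.IsGE Y n → ∀ f : Z ⟶ Y, f = 0) : t.IsLE Z (n - 1) := by
  rw [t.isLE_iff_orthogonal (n - 1) n (by lia)]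
  intro Y f hY
  obtain ⟨X, G, hX, hG, x, g, h, hT⟩ := t.exists_triangle Y n (n + 1) rfl
  have hX' : t.IsLE X n := ⟨hX⟩
  have hG' : t.IsGE G (n + 1) := ⟨hG⟩
  obtain ⟨f', rfl⟩ : ∃ f' : Z ⟶ X, f = f' ≫ x :=
    Triangle.coyoneda_exact₂ _ hT f (t.zero (f ≫ g) n (n + 1))
  rw [hpure X hX' (isGE_obj₁ t hT hY (t.isGE_of_ge G _ (n + 1))) f', zero_comp]

lemma isLE_biproduct {ι : Type*} [Finite ι] (X : ι → C) {n : ℤ} (hX : ∀ a, t.IsLE (X a) n) :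
    t.IsLE (⨁ X) n := by
  rw [t.isLE_iff_orthogonal n (n + 1) rfl]
  intro Y f hY
  refine biproduct.hom_ext' _ _ fun a ↦ ?_
  rw [comp_zero]
  have := hX a
  exact t.zero _ n (n + 1)

end TStructures

section Hearts

open Triangulated

variable {C}

lemma TStr.mem_of_iso (T : TStr C) {X Y : C} (e : X ≅ Y) (hX : X ∈ T.P) : Y ∈ T.P :=
  T.summand X Y e.inv e.hom (by simp) hX

/-- The t-structure in the sense of Mathlib with aisle `T.P`: its objects in degrees `≤ 0` are
those of `T.P`, and its objects in degrees `≥ 1` are those of the perpendicular of `T.P`. -/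
def TStr.toTStructure (T : TStr C) : TStructure C where
  le n X := X⟦n⟧ ∈ T.P
  ge n X := X⟦n - 1⟧ ∈ perp C T.P
  le_isClosedUnderIsomorphisms n := ⟨fun e h ↦ T.mem_of_iso ((shiftFunctor C n).mapIso e) h⟩
  ge_isClosedUnderIsomorphisms n :=
    ⟨fun e h ↦ perp_of_iso ((shiftFunctor C (n - 1)).mapIso e) h⟩
  le_shift n a n' h X hX := T.mem_of_iso ((shiftFunctorAdd' C a n' n h).app X) hX
  ge_shift n a n' h X hX :=
    perp_of_iso ((shiftFunctorAdd' C a (n' - 1) (n - 1) (by lia)).app X) hX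
  zero' X Y f hX hY :=
    perp_of_iso ((shiftFunctorZero' C (1 - 1 : ℤ) (by lia)).app Y) hY X
      (T.mem_of_iso ((shiftFunctorZero C ℤ).app X) hX) f
  le_zero_le X hX := T.shift_mem X (T.mem_of_iso ((shiftFunctorZero C ℤ).app X) hX)
  ge_one_le X hX :=
    perp_shift_neg_one T.shift_mem
      (perp_of_iso ((shiftFunctorZero' C (1 - 1 : ℤ) (by lia)).app X) hX)
  exists_triangle_zero_one A := by
    obtain ⟨F, G, f, g, h, hF, hG, hT⟩ := T.exists_triangle A
    exact ⟨F, G, T.mem_of_iso ((shiftFunctorZero C ℤ).symm.app F) hF,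
      perp_of_iso ((shiftFunctorZero' C (1 - 1 : ℤ) (by lia)).symm.app G) hG, f, g, h, hT⟩

variable {T : TStr C}

lemma mem_heart_iff {X : C} :
    X ∈ heart C T ↔ T.toTStructure.IsLE X 0 ∧ T.toTStructure.IsGE X 0 := by
  constructor
  · rintro ⟨h₁, h₂⟩
    exact ⟨⟨T.mem_of_iso ((shiftFunctorZero C ℤ).symm.app X) h₁⟩, ⟨h₂⟩⟩
  · rintro ⟨⟨h₁⟩, ⟨h₂⟩⟩
    exact ⟨T.mem_of_iso ((shiftFunctorZero C ℤ).app X) h₁, h₂⟩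

lemma TStr.exists_isLE (T : TStr C) (X : C) (a : ℤ) :
    ∃ b : ℤ, a ≤ b ∧ T.toTStructure.IsLE X b := by
  obtain ⟨b, hb⟩ := T.bounded_above X
  exact ⟨max a b, le_max_left _ _, ⟨hb _ (le_max_right _ _)⟩⟩

lemma TStr.exists_isGE (T : TStr C) (X : C) (b : ℤ) :
    ∃ a : ℤ, a ≤ b ∧ T.toTStructure.IsGE X a := by
  obtain ⟨a, ha⟩ := T.bounded_below X
  exact ⟨min a b, min_le_right _ _, ⟨ha _ (by have := min_le_left a b; lia)⟩⟩

lemma IsProjOf.hom_pure_eq_zero {P : C} (hP : IsProjOf C T P) {m : ℤ} (hm : m ≠ 0) {Y : C}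
    (hY : T.toTStructure.IsLE Y m) (hY' : T.toTStructure.IsGE Y m) (f : P ⟶ Y) : f = 0 := by
  have hYm : Y⟦m⟧ ∈ heart C T := mem_heart_iff.2
    ⟨T.toTStructure.isLE_shift Y m m 0, T.toTStructure.isGE_shift Y m m 0⟩
  rw [← cancel_mono ((shiftEquiv C m).unitIso.app Y).hom, zero_comp]
  exact hP (-m) (by lia) _ hYm _

lemma IsProjOf.isLE {P : C} (hP : IsProjOf C T P) : T.toTStructure.IsLE P 0 := by
  rw [T.toTStructure.isLE_iff_orthogonal 0 1 rfl]
  intro Y f hY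
  obtain ⟨b, hb, hYb⟩ := T.exists_isLE Y 1
  exact hom_eq_zero_of_hom_pure_eq_zero T.toTStructure hb
    (fun m hm Z hZ hZ' ↦ hP.hom_pure_eq_zero (by have := hm.1; lia) hZ hZ') hY hYb f

lemma IsProjOf.hom_eq_zero {P : C} (hP : IsProjOf C T P) {Y : C}
    (hY : T.toTStructure.IsLE Y (-1)) (f : P ⟶ Y) : f = 0 := by
  obtain ⟨a, ha, hYa⟩ := T.exists_isGE Y (-1)
  exact hom_eq_zero_of_hom_pure_eq_zero T.toTStructure ha
    (fun m hm Z hZ hZ' ↦ hP.hom_pure_eq_zero (by have := hm.2; lia) hZ hZ') hYa hY f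

lemma FiniteHeart.hom_heart_eq_zero (hfin : FiniteHeart C T) {Z : C}
    (hZ : ∀ S : C, IsSimpleIn C (heart C T) S → ∀ f : Z ⟶ S, f = 0) {M : C}
    (hM : M ∈ heart C T) (f : Z ⟶ M) : f = 0 := by
  obtain ⟨m, obj, h0, ⟨e⟩, htri⟩ := hfin.2 M hM
  have hom_obj_eq_zero : ∀ i ≤ m, ∀ g : Z ⟶ obj i, g = 0 := by
    intro i
    induction i with
    | zero => exact fun _ g ↦ h0.eq_of_tgt _ _
    | succ i ih =>
      intro hi g
      obtain ⟨s, a, b, d, hs, hT⟩ := htri i (by lia)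
      obtain ⟨g', rfl⟩ : ∃ g' : Z ⟶ obj i, g = g' ≫ a :=
        Triangle.coyoneda_exact₂ _ hT g (hZ s hs _)
      rw [ih (by lia) g', zero_comp]
  rw [← cancel_mono e.inv, zero_comp]
  exact hom_obj_eq_zero m le_rfl _

lemma FiniteHeart.isLE_neg_one_of_hom_simple_eq_zero (hfin : FiniteHeart C T) {Z : C}
    (hZ : T.toTStructure.IsLE Z 0)
    (hZS : ∀ S : C, IsSimpleIn C (heart C T) S → ∀ f : Z ⟶ S, f = 0) :
    T.toTStructure.IsLE Z (-1) :=
  isLE_sub_one_of_hom_pure_eq_zero T.toTStructure hZ fun _ hM hM' ↦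
    hfin.hom_heart_eq_zero hZS (mem_heart_iff.2 ⟨hM, hM'⟩)

lemma IsSimpleIn.isIso_or_isZero_of_epi {S M : C} (hS : IsSimpleIn C (heart C T) S)
    (hM : M ∈ heart C T) (π : S ⟶ M)
    (hπ : ∀ W : C, T.toTStructure.IsGE W 0 → ∀ y : M ⟶ W, π ≫ y = 0 → y = 0) :
    IsIso π ∨ IsZero M := by
  obtain ⟨hS₀, hS₀'⟩ := mem_heart_iff.1 hS.1
  obtain ⟨-, hM₀'⟩ := mem_heart_iff.1 hM
  obtain ⟨L, l, d, hL⟩ := distinguished_cocone_triangle₁ π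
  have hL₀ : T.toTStructure.IsLE L 0 := isLE_obj₁ _ hL hS₀ hπ
  have hL₀' : T.toTStructure.IsGE L 0 := isGE_obj₁ _ hL hS₀' (T.toTStructure.isGE_of_ge M _ 0)
  exact (hS.2.2 L M l π d (mem_heart_iff.2 ⟨hL₀, hL₀'⟩) hM hL).imp_left
    (Triangle.isZero₁_iff_isIso₂ _ hL).1

lemma IsSimpleIn.isLE_fibre {K X S : C} (hS : IsSimpleIn C (heart C T) S)
    {f : K ⟶ X} {g : X ⟶ S} {h : S ⟶ K⟦(1 : ℤ)⟧} (hT : Triangle.mk f g h ∈ distTriang C)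
    (hX : T.toTStructure.IsLE X 0) (hg : g ≠ 0) : T.toTStructure.IsLE K 0 := by
  have hK₁ : T.toTStructure.IsLE (K⟦(1 : ℤ)⟧) 0 :=
    isLE_obj₃ _ (rot_of_distTriang _ hT) (T.toTStructure.isLE_of_le X 0 _) (mem_heart_iff.1 hS.1).1
  obtain ⟨F, M, hF, hM, x, m, d, hT'⟩ :=
    T.toTStructure.exists_triangle (K⟦(1 : ℤ)⟧) (-1) 0 (by lia)
  have hF' : T.toTStructure.IsLE F (-1) := ⟨hF⟩
  have hM' : M ∈ heart C T := mem_heart_iff.2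
    ⟨isLE_obj₃ _ hT' (T.toTStructure.isLE_of_le F (-1) _) hK₁, ⟨hM⟩⟩
  have hhm : IsIso (h ≫ m) ∨ IsZero M := by
    refine hS.isIso_or_isZero_of_epi hM' _ fun W hW y hy ↦ ?_
    rw [assoc] at hy
    exact eq_zero_of_comp_mor₂_eq_zero _ hT' (T.toTStructure.isLE_of_le F (-1) 0) hW y
      (eq_zero_of_comp_mor₂_eq_zero _ (rot_of_distTriang _ hT) hX hW _ hy)
  rcases hhm with hiso | hM0
  · have hgh : g ≫ h = 0 := comp_distTriang_mor_zero₂₃ _ hT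
    exact absurd (by rw [← cancel_mono (h ≫ m), zero_comp, ← assoc, hgh, zero_comp]) hg
  · have hx : IsIso x := (Triangle.isZero₃_iff_isIso₁ _ hT').1 hM0
    have hK₁' : T.toTStructure.IsLE (K⟦(1 : ℤ)⟧) (-1) := T.toTStructure.isLE_of_iso (asIso x) (-1)
    exact T.toTStructure.isLE_of_shift K 0 1 (-1)

end Hearts

section Covers

variable {C} {k : Type*} [Field k] [Linear k C]

variable (k) in
/-- Projectives `P i` of a finite heart which are covers of its simple objects `S i`: the space
`Hom(P i, S i)` is identified with `k`, and `Hom(P i, S j) = 0` for `i ≠ j`. -/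
structure ProjectiveCovers (T : TStr C) {n : ℕ} (S P : Fin n → C) where
  finite : FiniteHeart C T
  simple : ∀ i, IsSimpleIn C (heart C T) (S i)
  exists_iso : ∀ Z, IsSimpleIn C (heart C T) Z → ∃ i, Nonempty (Z ≅ S i)
  proj : ∀ i, IsProjOf C T (P i)
  coord : ∀ i, (P i ⟶ S i) ≃ₗ[k] k
  hom_eq_zero : ∀ {i j}, i ≠ j → ∀ f : P i ⟶ S j, f = 0

namespace ProjectiveCovers

variable {T : TStr C} {n : ℕ} {S P : Fin n → C}

/-- Projective covers given by the dimensions of the spaces `Hom(P i, S j)`, with an arbitrary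
choice of the coordinates on the lines `Hom(P i, S i)`. -/
noncomputable def ofFinrank [∀ X Y : C, FiniteDimensional k (X ⟶ Y)] (hfin : FiniteHeart C T)
    (hS : ∀ i, IsSimpleIn C (heart C T) (S i))
    (hSall : ∀ Z, IsSimpleIn C (heart C T) Z → ∃ i, Nonempty (Z ≅ S i))
    (hP : ∀ i, IsProjOf C T (P i))
    (hdual : ∀ i j, Module.finrank k (P i ⟶ S j) = if i = j then 1 else 0) :
    ProjectiveCovers k T S P where
  finite := hfin
  simple := hS
  exists_iso := hSall
  proj := hP
  coord i := LinearEquiv.ofFinrankEq _ _ (by simp [hdual])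
  hom_eq_zero {i j} hij f := by
    have : Subsingleton (P i ⟶ S j) :=
      (Module.finrank_eq_zero_iff_of_free k _).1 (by simp [hdual, hij])
    exact Subsingleton.elim _ _

variable (c : ProjectiveCovers k T S P)

/-- The covering morphism `P i ⟶ S i`, the one of coordinate `1`. -/
def p (i : Fin n) : P i ⟶ S i := (c.coord i).symm 1

lemma coord_p (i : Fin n) : c.coord i (c.p i) = 1 := (c.coord i).apply_symm_apply 1

lemma p_ne_zero (i : Fin n) : c.p i ≠ 0 := by
  intro h
  simpa [h] using c.coord_p i

lemma eq_coord_smul {i : Fin n} (f : P i ⟶ S i) : f = c.coord i f • c.p i :=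
  (c.coord i).injective (by simp [c.coord_p])

include c in
lemma isGE_simple (i : Fin n) : T.toTStructure.IsGE (S i) 0 :=
  (mem_heart_iff.1 (c.simple i).1).2

lemma comp_eq_zero {W : C} {l j : Fin n} {u : W ⟶ P l} (hu : u ≫ c.p l = 0) (v : P l ⟶ S j) :
    u ≫ v = 0 := by
  by_cases hlj : l = j
  · subst hlj
    rw [c.eq_coord_smul v, Linear.comp_smul, hu, smul_zero]
  · rw [c.hom_eq_zero hlj v, comp_zero]

include c in
lemma exists_comp_eq_of_hom_simple_injective {Q K : C} (hQ : T.toTStructure.IsLE Q 0)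
    (hK : T.toTStructure.IsLE K 0) (q : Q ⟶ K) (hq : ∀ l, ∀ g : K ⟶ S l, q ≫ g = 0 → g = 0)
    {i : Fin n} (x : P i ⟶ K) : ∃ y : P i ⟶ Q, x = y ≫ q := by
  obtain ⟨Z, a, b, hT⟩ := distinguished_cocone_triangle q
  have hZ : T.toTStructure.IsLE Z (-1) := by
    refine c.finite.isLE_neg_one_of_hom_simple_eq_zero
      (isLE_obj₃ _ hT (T.toTStructure.isLE_of_le Q 0 _) hK) fun S' hS' f ↦ ?_
    obtain ⟨l, ⟨e⟩⟩ := c.exists_iso S' hS'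
    have hqa : q ≫ a = 0 := comp_distTriang_mor_zero₁₂ _ hT
    rw [← cancel_mono e.hom, zero_comp]
    exact eq_zero_of_comp_mor₂_eq_zero _ hT hQ (c.isGE_simple l) _
      (hq l _ (by rw [← assoc, hqa, zero_comp]))
  exact Triangle.coyoneda_exact₂ _ hT x ((c.proj i).hom_eq_zero hZ _)

lemma exists_section {i : Fin n} (f : P i ⟶ P i) (hf : f ≫ c.p i ≠ 0) :
    ∃ s : P i ⟶ P i, s ≫ f = 𝟙 (P i) := by
  have hom_simple_injective : ∀ l, ∀ g : P i ⟶ S l, f ≫ g = 0 → g = 0 := by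
    intro l g hg
    by_cases hil : i = l
    · subst hil
      rw [c.eq_coord_smul g, Linear.comp_smul] at hg
      rw [c.eq_coord_smul g, (smul_eq_zero.1 hg).resolve_right hf, zero_smul]
    · exact c.hom_eq_zero hil g
  obtain ⟨s, hs⟩ := c.exists_comp_eq_of_hom_simple_injective (c.proj i).isLE (c.proj i).isLE f
    hom_simple_injective (𝟙 (P i))
  exact ⟨s, hs.symm⟩

lemma isIso_of_comp_ne_zero {i : Fin n} (f : P i ⟶ P i) (hf : f ≫ c.p i ≠ 0) : IsIso f := by
  obtain ⟨s, hs⟩ := c.exists_section f hf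
  have hsp : s ≫ c.p i ≠ 0 := fun h ↦ c.p_ne_zero i <| by
    rw [← id_comp (c.p i), ← hs, assoc, c.comp_eq_zero h]
  obtain ⟨r, hr⟩ := c.exists_section s hsp
  have hrf : r = f := by rw [← comp_id r, ← hs, ← assoc, hr, id_comp]
  exact ⟨s, by rw [← hrf, hr], hs⟩

lemma mem_radSet_iff {i j : Fin n} {f : P i ⟶ P j} :
    f ∈ radSet C (P i) (P j) ↔ f ≫ c.p j = 0 := by
  constructor
  · intro hf
    by_contra hfp
    obtain rfl : i = j := by
      by_contra hij
      exact hfp (c.hom_eq_zero hij _)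
    have := c.isIso_of_comp_ne_zero f hfp
    have hzero : IsIso (𝟙 (P i) - f ≫ inv f) := hf (inv f)
    rw [IsIso.hom_inv_id, sub_self, isIsoZero_iff_source_target_isZero] at hzero
    exact c.p_ne_zero i (hzero.1.eq_of_src _ _)
  · intro hf g
    apply c.isIso_of_comp_ne_zero
    rw [Preadditive.sub_comp, id_comp, assoc, c.comp_eq_zero hf, sub_zero]
    exact c.p_ne_zero i

lemma mem_radMod_iff {i j : Fin n} {f : P i ⟶ P j} :
    f ∈ radMod C k (P i) (P j) ↔ f ≫ c.p j = 0 := by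
  have hker : radSet C (P i) (P j) =
      (LinearMap.ker (Linear.rightComp k (P i) (c.p j)) : Set (P i ⟶ P j)) := by
    ext f
    simp [c.mem_radSet_iff]
  rw [radMod, hker, Submodule.span_eq, LinearMap.mem_ker, Linear.rightComp_apply]

/-- The composition pairing `Hom(P i, K) × Hom(K, S i) → Hom(P i, S i) = k`, as a map to the
dual space. -/
def pairing (K : C) (i : Fin n) : (P i ⟶ K) →ₗ[k] Module.Dual k (K ⟶ S i) :=
  LinearMap.compr₂ (Linear.comp (P i) K (S i)) (c.coord i).toLinearMap

lemma pairing_apply {K : C} {i : Fin n} (x : P i ⟶ K) (g : K ⟶ S i) :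
    c.pairing K i x g = c.coord i (x ≫ g) := rfl

lemma pairing_comp_self {K : C} {i : Fin n} (u : P i ⟶ P i) (v : P i ⟶ K) :
    c.pairing K i (u ≫ v) = c.coord i (u ≫ c.p i) • c.pairing K i v := by
  ext g
  rw [LinearMap.smul_apply, pairing_apply, pairing_apply, assoc, c.eq_coord_smul (v ≫ g),
    Linear.comp_smul, map_smul, map_smul, c.coord_p, smul_eq_mul, smul_eq_mul, smul_eq_mul,
    mul_one, mul_comm]

lemma pairing_comp_of_comp_eq_zero {K : C} {i l : Fin n} {u : P i ⟶ P l} (hu : u ≫ c.p l = 0)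
    (v : P l ⟶ K) : c.pairing K i (u ≫ v) = 0 := by
  ext g
  rw [pairing_apply, assoc, c.comp_eq_zero hu, map_zero, LinearMap.zero_apply]

lemma pairing_sum_comp {K : C} {i : Fin n} {β : Fin n → Type*} [∀ l, Fintype (β l)]
    (u : ∀ l, β l → (P i ⟶ P l)) (v : ∀ l, β l → (P l ⟶ K)) :
    c.pairing K i (∑ l, ∑ a, u l a ≫ v l a) =
      ∑ a, c.coord i (u i a ≫ c.p i) • c.pairing K i (v i a) := by
  simp only [map_sum, ← pairing_comp_self]
  exact Fintype.sum_eq_single i fun l hl ↦ Finset.sum_eq_zero fun a _ ↦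
    c.pairing_comp_of_comp_eq_zero (c.hom_eq_zero hl.symm _) _

lemma exists_comp_eq_p {K : C} (hK : T.toTStructure.IsLE K 0) {i : Fin n} {g : K ⟶ S i}
    (hg : g ≠ 0) : ∃ x : P i ⟶ K, x ≫ g = c.p i := by
  obtain ⟨K', a, b, hT⟩ := distinguished_cocone_triangle₁ g
  have hK' : T.toTStructure.IsLE K' 0 := (c.simple i).isLE_fibre hT hK hg
  obtain ⟨x, hx⟩ : ∃ x : P i ⟶ K, c.p i = x ≫ g := Triangle.coyoneda_exact₃ _ hT _
    ((c.proj i).hom_eq_zero (T.toTStructure.isLE_shift K' 0 1 (-1)) _)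
  exact ⟨x, hx.symm⟩

lemma pairing_surjective {K : C} (hK : T.toTStructure.IsLE K 0) (i : Fin n)
    [FiniteDimensional k (K ⟶ S i)] :
    Function.Surjective (c.pairing K i) := by
  rw [← LinearMap.flip_injective_iff₂, injective_iff_map_eq_zero]
  intro g hg
  by_contra hg0
  obtain ⟨x, hx⟩ := c.exists_comp_eq_p hK hg0
  have hxg : c.pairing K i x g = 0 := LinearMap.congr_fun hg x
  rw [pairing_apply, hx, c.coord_p] at hxg
  exact one_ne_zero hxg

include c in
lemma exists_eq_sum_comp {α : Type} [Fintype α] {s : α → Fin n} {K : C}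
    (hK : T.toTStructure.IsLE K 0) (y : ∀ a, P (s a) ⟶ K)
    (hy : ∀ l, ∀ g : K ⟶ S l, (∀ a, y a ≫ g = 0) → g = 0) {i : Fin n} (x : P i ⟶ K) :
    ∃ u : ∀ a, P i ⟶ P (s a), x = ∑ a, u a ≫ y a := by
  obtain ⟨u, rfl⟩ := c.exists_comp_eq_of_hom_simple_injective
    (isLE_biproduct T.toTStructure (fun a ↦ P (s a)) fun a ↦ (c.proj (s a)).isLE) hK
    (biproduct.desc y)
    (fun l g hg ↦ hy l g fun a ↦ by rw [← biproduct.ι_desc y a, assoc, hg, comp_zero]) x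
  refine ⟨fun a ↦ u ≫ biproduct.π _ a, ?_⟩
  rw [biproduct.desc_eq, Preadditive.comp_sum]
  simp only [assoc]

lemma ker_pairing_eq_span {K : C} [∀ l, FiniteDimensional k (K ⟶ S l)]
    (hK : T.toTStructure.IsLE K 0) (i : Fin n) :
    LinearMap.ker (c.pairing K i) = Submodule.span k {x | ∃ (l : Fin n) (u : P i ⟶ P l)
      (v : P l ⟶ K), u ∈ radSet C (P i) (P l) ∧ x = u ≫ v} := by
  refine le_antisymm (fun x hx ↦ ?_) (Submodule.span_le.2 ?_)
  · let b := fun l ↦ Module.finBasis k (K ⟶ S l)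
    choose y hy using fun l a ↦ c.pairing_surjective hK l ((b l).coord a)
    obtain ⟨u, hxu⟩ := c.exists_eq_sum_comp hK 
      (fun a : Σ l, Fin (Module.finrank k (K ⟶ S l)) ↦ y a.1 a.2)
      (fun l g hg ↦ (b l).forall_coord_eq_zero_iff.1 fun a ↦ by
        rw [← hy l a, pairing_apply, hg ⟨l, a⟩, map_zero]) x
    have hrel : ∑ a, c.coord i (u ⟨i, a⟩ ≫ c.p i) • (b i).coord a = 0 := by
      simp only [← hy]
      rw [← c.pairing_sum_comp (fun l a ↦ u ⟨l, a⟩) y, ← Fintype.sum_sigma', ← hxu]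
      exact hx
    have hrad : ∀ a, u a ≫ c.p a.1 = 0 := by
      rintro ⟨l, a⟩
      by_cases hil : i = l
      · subst hil
        refine (c.coord i).map_eq_zero_iff.1 ?_
        simpa [Finsupp.single_apply] using LinearMap.congr_fun hrel (b i a)
      · exact c.hom_eq_zero hil _
    rw [hxu]
    exact Submodule.sum_mem _ fun a _ ↦
      Submodule.subset_span ⟨a.1, u a, y a.1 a.2, c.mem_radSet_iff.2 (hrad a), rfl⟩
  · rintro _ ⟨l, u, v, hu, rfl⟩
    exact c.pairing_comp_of_comp_eq_zero (c.mem_radSet_iff.1 hu) v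

section Kernel

variable {c} {K : C} {j : Fin n} {ι : K ⟶ P j} {δ : S j ⟶ K⟦(1 : ℤ)⟧}
  (hT : Triangle.mk ι (c.p j) δ ∈ distTriang C)

include hT

lemma isLE_kernel : T.toTStructure.IsLE K 0 :=
  (c.simple j).isLE_fibre hT (c.proj j).isLE (c.p_ne_zero j)

lemma kernel_comp_p : ι ≫ c.p j = 0 := comp_distTriang_mor_zero₁₂ _ hT

/-- The kernel `K` of the covering morphism of `P j` represents the radical morphisms to `P j`. -/
noncomputable def radHomEquiv (i : Fin n) : (P i ⟶ K) ≃ₗ[k] radMod C k (P i) (P j) := by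
  refine LinearEquiv.ofBijective ((Linear.rightComp k (P i) ι).codRestrict _ fun x ↦
    c.mem_radMod_iff.2 (by rw [Linear.rightComp_apply, assoc, kernel_comp_p hT, comp_zero]))
    ⟨?_, ?_⟩
  · rw [injective_iff_map_eq_zero]
    exact fun x hx ↦ eq_zero_of_comp_mor₁_eq_zero hT
      (c.proj i (-1) (by lia) _ (c.simple j).1) x (congrArg Subtype.val hx)
  · rintro ⟨f, hf⟩
    obtain ⟨x, rfl⟩ : ∃ x : P i ⟶ K, f = x ≫ ι :=
      Triangle.coyoneda_exact₂ _ hT f (c.mem_radMod_iff.1 hf)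
    exact ⟨x, rfl⟩

lemma map_ker_pairing [∀ l, FiniteDimensional k (K ⟶ S l)] (i : Fin n) :
    (LinearMap.ker (c.pairing K i)).map (Linear.rightComp k (P i) ι) = radSqMod C k n P i j := by
  rw [c.ker_pairing_eq_span (isLE_kernel hT), Submodule.map_span, radSqMod]
  congr 1
  ext f
  constructor
  · rintro ⟨_, ⟨l, u, v, hu, rfl⟩, rfl⟩
    exact ⟨l, u, v ≫ ι, hu,
      c.mem_radSet_iff.2 (by rw [assoc, kernel_comp_p hT, comp_zero]), assoc _ _ _⟩
  · rintro ⟨l, u, v, hu, hv, rfl⟩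
    obtain ⟨w, rfl⟩ : ∃ w : P l ⟶ K, v = w ≫ ι :=
      Triangle.coyoneda_exact₂ _ hT v (c.mem_radSet_iff.1 hv)
    exact ⟨u ≫ w, ⟨l, u, w, hu, rfl⟩, assoc _ _ _⟩

lemma map_radHomEquiv_ker_pairing [∀ l, FiniteDimensional k (K ⟶ S l)] (i : Fin n) :
    (LinearMap.ker (c.pairing K i)).map (radHomEquiv hT i).toLinearMap =
      (radSqMod C k n P i j).comap (radMod C k (P i) (P j)).subtype := by
  have hcomp : Linear.rightComp k (P i) ι =
      (radMod C k (P i) (P j)).subtype ∘ₗ (radHomEquiv hT i).toLinearMap := rfl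
  rw [← map_ker_pairing hT, hcomp, Submodule.map_comp,
    Submodule.comap_map_eq_of_injective (Submodule.subtype_injective _)]

/-- The space of irreducible maps `P i ⟶ P j` is dual to `Hom(K, S i)`, where `K` is the kernel
of the covering morphism of `P j`. -/
noncomputable def irrEquiv [∀ l, FiniteDimensional k (K ⟶ S l)] (i : Fin n) :
    IrrSpace C k n P i j ≃ₗ[k] Module.Dual k (K ⟶ S i) :=
  (Submodule.Quotient.equiv _ _ (radHomEquiv hT i) (map_radHomEquiv_ker_pairing hT i)).symm ≪≫ₗ
    (c.pairing K i).quotKerEquivOfSurjective (c.pairing_surjective (isLE_kernel hT) i)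

end Kernel

include c in
lemma finrank_end_simple (i : Fin n) : Module.finrank k (S i ⟶ S i) = 1 := by
  obtain ⟨K, ι, δ, hT⟩ := distinguished_cocone_triangle₁ (c.p i)
  refine (finrank_eq_one_iff_of_nonzero' (𝟙 (S i)) fun h ↦
    (c.simple i).2.1 ((IsZero.iff_id_eq_zero _).2 h)).2 fun e ↦ ⟨c.coord i (c.p i ≫ e), ?_⟩
  refine (sub_eq_zero.1 (eq_zero_of_comp_mor₂_eq_zero _ hT (isLE_kernel hT) (c.isGE_simple i)
    (e - c.coord i (c.p i ≫ e) • 𝟙 (S i)) ?_)).symm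
  rw [Preadditive.comp_sub, Linear.comp_smul, comp_id, ← c.eq_coord_smul, sub_self]

end ProjectiveCovers

end Covers

theorem statement_15_general (k : Type*) [Field k] [Linear k C]
    [∀ X Y : C, FiniteDimensional k (X ⟶ Y)]
    (T : TStr C) (hfin : FiniteHeart C T) (n : ℕ) (S P : Fin n → C)
    (hS : ∀ i, IsSimpleIn C (heart C T) (S i))
    (hSall : ∀ Z, IsSimpleIn C (heart C T) Z → ∃ i, Nonempty (Z ≅ S i))
    (hP : ∀ i, IsProjOf C T (P i))
    (hdual : ∀ i j, Module.finrank k (P i ⟶ S j) = if i = j then 1 else 0)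
    (i j : Fin n)
    (hend : Module.finrank k ((S i)⟦(1 : ℤ)⟧ ⟶ (S i)⟦(1 : ℤ)⟧) = 1) :
    Nonempty ((IrrSpace C k n P i j) ≃ₗ[k] Module.Dual k (S j ⟶ (S i)⟦(1 : ℤ)⟧)) := by
  let c : ProjectiveCovers k T S P := .ofFinrank hfin hS hSall hP hdual
  obtain ⟨K, ι, δ, hT⟩ := distinguished_cocone_triangle₁ (c.p j)
  have hfinrank : Module.finrank k (K ⟶ S i) = Module.finrank k (S j ⟶ (S i)⟦(1 : ℤ)⟧) :=
    finrank_hom_eq_finrank_hom_shift hT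
      (c.comp_eq_zero (ProjectiveCovers.kernel_comp_p hT))
      (c.proj j 1 one_ne_zero _ (c.simple i).1) (c.finrank_end_simple i) hend
  refine ⟨ProjectiveCovers.irrEquiv hT i ≪≫ₗ LinearEquiv.ofFinrankEq _ _ ?_⟩
  rw [Subspace.dual_finrank_eq, Subspace.dual_finrank_eq, hfinrank]

/-- Let `H` be a finite heart with simples `S 0, …, S (n-1)` and
projectives `P 0, …, P (n-1)` with `dim Hom(P i, S j) = δ_{ij}`.  With
`A = End(P 0 ⊕ … ⊕ P (n-1))`, `J` the Jacobson radical of `A` and `e_i` the idempotent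
projecting onto `P i`, there is for all `i, j` a `k`-linear isomorphism
`e_j (J/J²) e_i ≅ Ext¹(S j, S i)^*`; that is, the space `Irr(P i, P j)` of irreducible
maps is dual to `Ext¹(S j, S i) = Hom(S j, (S i)[1])`. -/
theorem statement_15 (k : Type*) [Field k] [IsAlgClosed k] [Linear k C]
    [∀ X Y : C, FiniteDimensional k (X ⟶ Y)] [HasFiniteBiproducts C]
    (T : TStr C) (hfin : FiniteHeart C T) (n : ℕ) (S P : Fin n → C)
    (hS : ∀ i, IsSimpleIn C (heart C T) (S i))
    (hSall : ∀ Z, IsSimpleIn C (heart C T) Z → ∃ i, Nonempty (Z ≅ S i))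
    (hP : ∀ i, IsProjOf C T (P i))
    (hdual : ∀ i j, Module.finrank k (P i ⟶ S j) = if i = j then 1 else 0)
    (i j : Fin n) :
    Nonempty ((IrrSpace C k n P i j) ≃ₗ[k]
      Module.Dual k (S j ⟶ (S i)⟦(1 : ℤ)⟧)) :=
  statement_15_general C k T hfin n S P hS hSall hP hdual i j <|
    finrank_end_map_eq_one (shiftFunctor C (1 : ℤ))
      ((ProjectiveCovers.ofFinrank hfin hS hSall hP hdual).finrank_end_simple i)

end Paper
end

section
/- Let D be a triangulated category, H and H0 hearts of bounded t-structures on D with H[1] ≤ H0 ≤ H[2], and S a rigid simple object of H for which the simple forward tilt H^♯_S is defined. Then the following are equivalent: (i) S[1] ∉ H0; (ii) H^♯_S[1] ≤ H0; (iii) S[2] ∈ H0. -/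
open CategoryTheory Category Limits Pretriangulated ZeroObject

universe v u

namespace Paper

variable (C : Type u) [Category.{v} C] [HasZeroObject C] [HasShift C ℤ]
  [Preadditive C] [∀ n : ℤ, (shiftFunctor C n).Additive] [Pretriangulated C]

variable {C}

variable (C)

/-!
Write `τ` and `τ₀` for the t-structures with hearts `H` and `H0`, in cohomological conventions. The
hypothesis `H[1] ≤ H0 ≤ H[2]` says `τ₀^{≤ 1} ⊆ τ^{≤ 0} ⊆ τ₀^{≤ 2}`. Consequently the truncation
triangle of `S` for `τ₀` at `1` has its outer terms in `H`, and its middle term is simple, so `S` is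
either `≤ 1` or `≥ 2` for `τ₀`. As `S` always lies between `1` and `2`, these alternatives mean
`S[1] ∈ H0` and `S[2] ∈ H0` respectively, and they exclude each other because `S` is not zero.

The aisle of the forward tilt at a torsion pair consists of the `X` in `τ^{≤ 0}` whose zeroth
cohomology is a torsion object. At the simple object `S` it is therefore the part of `τ^{≤ 0}` left
orthogonal to `S`, and the aisle of `H0` shifted to degree `1` is contained in it exactly when every
object of `τ₀^{≤ 1}` is left orthogonal to `S`, that is, when `S` is `≥ 2` for `τ₀`.
-/

section Development

variable {C}

/-! ### Truncation triangles of t-structures -/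

section TStructure

open ObjectProperty

variable {t t₀ : Triangulated.TStructure C}

instance (n : ℤ) : (t.le n).ContainsZero where
  exists_zero := ⟨0, isZero_zero C, t.le_of_isLE 0 n⟩

instance (n : ℤ) : (t.ge n).ContainsZero where
  exists_zero := ⟨0, isZero_zero C, t.ge_of_isGE 0 n⟩

instance (n : ℤ) : (t.le n).IsTriangulatedClosed₂ :=
  .mk' fun Y hY h₁ h₃ => (t.isLE₂ Y hY n ⟨h₁⟩ ⟨h₃⟩).le

instance (n : ℤ) : (t.ge n).IsTriangulatedClosed₂ :=
  .mk' fun Y hY h₁ h₃ => (t.isGE₂ Y hY n ⟨h₁⟩ ⟨h₃⟩).ge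

lemma isLE_obj₃_s17 {Y : Triangle C} (hY : Y ∈ distTriang C) (n : ℤ)
    (h₁ : t.IsLE Y.obj₁ (n + 1)) (h₂ : t.IsLE Y.obj₂ n) : t.IsLE Y.obj₃ n :=
  t.isLE₂ _ (rot_of_distTriang _ hY) n h₂ (t.isLE_shift Y.obj₁ (n + 1) 1 n)

lemma isGE_obj₁_s17 {Y : Triangle C} (hY : Y ∈ distTriang C) (n : ℤ)
    (h₂ : t.IsGE Y.obj₂ n) (h₃ : t.IsGE Y.obj₃ (n - 1)) : t.IsGE Y.obj₁ n :=
  t.isGE₂ _ (inv_rot_of_distTriang _ hY) n (t.isGE_shift Y.obj₃ (n - 1) (-1) n) h₂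

lemma heart_shift_iff (X : C) (n : ℤ) : t.heart (X⟦n⟧) ↔ t.IsLE X n ∧ t.IsGE X n := by
  rw [t.mem_heart_iff, t.isLE_shift_iff X n n 0, t.isGE_shift_iff X n n 0]

lemma le_le_shift_iff (a m m' n n' : ℤ) (hm : a + m' = m := by lia) (hn : a + n' = n := by lia) :
    t₀.le m' ≤ t.le n' ↔ t₀.le m ≤ t.le n := by
  constructor
  · intro h X hX
    have : t.IsLE (X⟦a⟧) n' := ⟨h _ (t₀.le_shift m a m' hm X hX)⟩
    exact (t.isLE_of_shift X n a n').le
  · intro h X hX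
    have : t.IsLE (X⟦-a⟧) n := ⟨h _ (t₀.le_shift m' (-a) m (by lia) X hX)⟩
    exact (t.isLE_of_shift X n' (-a) n).le

lemma ge_le_ge_of_le_le_le {m m' n n' : ℤ} (h : t₀.le m ≤ t.le n)
    (hm : m + 1 = m') (hn : n + 1 = n') : t.ge n' ≤ t₀.ge m' := by
  intro X hX
  have : t.IsGE X n' := ⟨hX⟩
  refine ((t₀.isGE_iff_orthogonal m m' hm X).2 fun Y f hY => ?_).ge
  have : t.IsLE Y n := ⟨h Y hY.le⟩
  exact t.zero f n n'

lemma le_le_le_of_ge_le_ge {m m' n n' : ℤ} (h : t₀.ge m' ≤ t.ge n')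
    (hm : m + 1 = m') (hn : n + 1 = n') : t.le n ≤ t₀.le m := by
  intro X hX
  have : t.IsLE X n := ⟨hX⟩
  refine ((t₀.isLE_iff_orthogonal m m' hm X).2 fun Y f hY => ?_).le
  have : t.IsGE Y n' := ⟨h Y hY.ge⟩
  exact t.zero f n n'

/-- A property of objects is stable under the truncations of a t-structure if it passes from an
object `X` to `τ^{≤ n} X` and `τ^{> n} X`. The truncations are encoded by an arbitrary
distinguished triangle with the corresponding bounds, rather than by the chosen functors, so that
the notion applies directly to the steps of a heart filtration. -/
def IsStableUnderTruncation (t : Triangulated.TStructure C) (Q : ObjectProperty C) : Prop :=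
  ∀ Y ∈ distTriang C, ∀ n : ℤ, t.IsLE Y.obj₁ n → t.IsGE Y.obj₃ (n + 1) → Q Y.obj₂ →
    Q Y.obj₁ ∧ Q Y.obj₃

lemma isStableUnderTruncation_ge (b : ℤ) : IsStableUnderTruncation t (t.ge b) := by
  intro Y hY n h₁ h₃ h₂
  have h₂ : t.IsGE Y.obj₂ b := ⟨h₂⟩
  rcases le_or_gt b (n + 1) with hb | hb
  · have := t.isGE_of_ge Y.obj₃ (b - 1) (n + 1)
    exact ⟨(isGE_obj₁_s17 hY b h₂ this).ge, (t.isGE_of_ge Y.obj₃ b (n + 1)).ge⟩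
  · have := t.isGE_of_ge Y.obj₂ (n + 2) b
    have := isGE_obj₁_s17 hY (n + 2) this (t.isGE_of_ge Y.obj₃ _ (n + 1))
    have hzero : IsZero Y.obj₁ := t.isZero Y.obj₁ n (n + 2)
    have : IsIso Y.mor₂ := (Triangle.isZero₁_iff_isIso₂ _ hY).1 hzero
    exact ⟨(t.ge b).prop_of_isZero hzero, (t.ge b).prop_of_isIso Y.mor₂ h₂.ge⟩

lemma containsZero_of_le_le {Q : ObjectProperty C} {n : ℤ} (hQ : t.le n ≤ Q) : Q.ContainsZero where
  exists_zero := ⟨0, isZero_zero C, hQ _ (t.le_of_isLE 0 n)⟩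

section Intermediate

variable {Q : ObjectProperty C} [Q.IsClosedUnderIsomorphisms] [Q.IsTriangulatedClosed₂]
  (hQ_ge : t.le (-1) ≤ Q) (hQ_le : Q ≤ t.le 0)

include hQ_ge in
lemma prop_obj₃_of_le_neg_one_le {Y : Triangle C} (hY : Y ∈ distTriang C)
    (h₁ : t.IsLE Y.obj₁ 0) (h₂ : Q Y.obj₂) : Q Y.obj₃ :=
  Q.ext_of_isTriangulatedClosed₂ _ (rot_of_distTriang _ hY) h₂
    (hQ_ge _ (t.isLE_shift Y.obj₁ 0 1 (-1)).le)

include hQ_ge hQ_le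

lemma isStableUnderTruncation_of_le_of_le : IsStableUnderTruncation t Q := by
  intro Y hY n h₁ h₃ h₂
  rcases lt_or_ge n 0 with hn | hn
  · exact ⟨hQ_ge _ (t.isLE_of_le Y.obj₁ n _).le,
      prop_obj₃_of_le_neg_one_le hQ_ge hY (t.isLE_of_le _ n _) h₂⟩
  · have : t.IsLE Y.obj₂ 0 := ⟨hQ_le _ h₂⟩
    have := isLE_obj₃_s17 hY n (t.isLE_of_le _ n _) (t.isLE_of_le _ 0 _)
    have hzero : IsZero Y.obj₃ := t.isZero Y.obj₃ n (n + 1)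
    have : IsIso Y.mor₁ := (Triangle.isZero₃_iff_isIso₁ _ hY).1 hzero
    have := containsZero_of_le_le hQ_ge
    exact ⟨Q.prop_of_isIso (inv Y.mor₁) h₂, Q.prop_of_isZero hzero⟩

end Intermediate

end TStructure

/-! ### Bounded t-structures given by their aisles -/

section TStr

omit [HasZeroObject C] [HasShift C ℤ] [∀ n : ℤ, (shiftFunctor C n).Additive]
  [Pretriangulated C] in
lemma mem_perp_of_iso {P : Set C} {X Y : C} (e : X ≅ Y) (hX : X ∈ perp C P) : Y ∈ perp C P := by
  intro F hF f
  rw [← cancel_mono e.inv, zero_comp]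
  exact hX F hF _

namespace TStr

variable (T : TStr C) {X Y : C}

lemma mem_of_iso_s17 (e : X ≅ Y) (hX : X ∈ T.P) : Y ∈ T.P :=
  T.summand X Y e.inv e.hom e.inv_hom_id hX

lemma shift_neg_one_mem_perp (hX : X ∈ perp C T.P) : X⟦(-1 : ℤ)⟧ ∈ perp C T.P := by
  intro F hF f
  apply (shiftFunctor C (1 : ℤ)).map_injective
  rw [Functor.map_zero]
  exact mem_perp_of_iso ((shiftEquiv C (1 : ℤ)).counitIso.symm.app X) hX _ (T.shift_mem F hF) _

/-- The t-structure with aisle `P`, as a t-structure in Mathlib's cohomological convention: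
`X` is `≤ n` when `X[n]` lies in `P`, so that `P[m]` is the class of objects `≤ -m`. -/
def toTStructure_s17 : Triangulated.TStructure C where
  le n X := X⟦n⟧ ∈ T.P
  ge n X := X⟦n - 1⟧ ∈ perp C T.P
  le_isClosedUnderIsomorphisms n := ⟨fun e hX => T.mem_of_iso_s17 ((shiftFunctor C n).mapIso e) hX⟩
  ge_isClosedUnderIsomorphisms n :=
    ⟨fun e hX => mem_perp_of_iso ((shiftFunctor C (n - 1)).mapIso e) hX⟩
  le_shift n a n' h X hX := T.mem_of_iso_s17 ((shiftFunctorAdd' C a n' n h).app X) hX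
  ge_shift n a n' h X hX :=
    mem_perp_of_iso ((shiftFunctorAdd' C a (n' - 1) (n - 1) (by lia)).app X) hX
  zero' X Y f hX hY :=
    mem_perp_of_iso ((shiftFunctorZero' C (1 - 1 : ℤ) (by lia)).app Y) hY X
      (T.mem_of_iso_s17 ((shiftFunctorZero C ℤ).app X) hX) f
  le_zero_le X hX :=
    T.mem_of_iso_s17 ((shiftFunctorAdd' C (0 : ℤ) 1 1 (by lia)).symm.app X) (T.shift_mem _ hX)
  ge_one_le X hX :=
    mem_perp_of_iso ((shiftFunctorAdd' C (1 - 1 : ℤ) (-1) (0 - 1) (by lia)).symm.app X)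
      (T.shift_neg_one_mem_perp hX)
  exists_triangle_zero_one A := by
    obtain ⟨F, G, f, g, h, hF, hG, hY⟩ := T.exists_triangle A
    exact ⟨F, G, T.mem_of_iso_s17 ((shiftFunctorZero C ℤ).symm.app F) hF,
      mem_perp_of_iso ((shiftFunctorZero' C (1 - 1 : ℤ) (by lia)).symm.app G) hG, f, g, h, hY⟩

lemma mem_iff_le_zero : X ∈ T.P ↔ T.toTStructure_s17.le 0 X :=
  ⟨T.mem_of_iso_s17 ((shiftFunctorZero C ℤ).symm.app X), T.mem_of_iso_s17 ((shiftFunctorZero C ℤ).app X)⟩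

lemma heart_eq : heart C T = {X | T.toTStructure_s17.heart X} := by
  ext X
  exact and_congr_left' T.mem_iff_le_zero

lemma mem_heart_iff :
    X ∈ heart C T ↔ T.toTStructure_s17.IsLE X 0 ∧ T.toTStructure_s17.IsGE X 0 := by
  rw [heart_eq]
  exact T.toTStructure_s17.mem_heart_iff X

lemma subset_shiftSet_iff (T₀ : TStr C) (m : ℤ) :
    T₀.P ⊆ shiftSet C T.P m ↔ T₀.toTStructure_s17.le 0 ≤ T.toTStructure_s17.le (-m) :=
  forall_congr' fun _ => imp_congr_left T₀.mem_iff_le_zero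

lemma shiftSet_subset_iff (T₀ : TStr C) (m : ℤ) :
    shiftSet C T.P m ⊆ T₀.P ↔ T.toTStructure_s17.le (-m) ≤ T₀.toTStructure_s17.le 0 :=
  forall_congr' fun _ => imp_congr_right fun _ => T₀.mem_iff_le_zero

lemma exists_isLE_s17 (X : C) : ∃ n, T.toTStructure_s17.IsLE X n := by
  obtain ⟨a, ha⟩ := T.bounded_above X
  exact ⟨a, ⟨ha a le_rfl⟩⟩

lemma exists_isGE_s17 (X : C) : ∃ n, T.toTStructure_s17.IsGE X n := by
  obtain ⟨b, hb⟩ := T.bounded_below X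
  exact ⟨b + 1, ⟨hb _ (by lia)⟩⟩

end TStr

end TStr

/-! ### Filtrations with factors in the heart -/

lemma distinguished_of_iso₁₃ {A A' B D D' : C} {f : A ⟶ B} {g : B ⟶ D} {h : D ⟶ A⟦(1 : ℤ)⟧}
    (hY : Triangle.mk f g h ∈ distTriang C) (a : A' ≅ A) (d : D' ≅ D) :
    Triangle.mk (a.hom ≫ f) (g ≫ d.inv) (d.hom ≫ h ≫ a.inv⟦(1 : ℤ)⟧') ∈ distTriang C := by
  refine isomorphic_distinguished _ hY _ (Triangle.isoMk _ _ a (Iso.refl _) d ?_ ?_ ?_)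
  · exact comp_id _
  · change (g ≫ d.inv) ≫ d.hom = 𝟙 B ≫ g
    rw [assoc, d.inv_hom_id, comp_id, id_comp]
  · change (d.hom ≫ h ≫ a.inv⟦(1 : ℤ)⟧') ≫ a.hom⟦(1 : ℤ)⟧' = d.hom ≫ h
    rw [assoc, assoc, ← Functor.map_comp, a.inv_hom_id, CategoryTheory.Functor.map_id, comp_id]

namespace HeartFiltration

variable {T : TStr C} {X : C}

/-- The filtration of length zero of a zero object, the base case for constructing filtrations. -/
def ofIsZero (T : TStr C) (hX : IsZero X) : HeartFiltration C T X where
  n := 0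
  obj _ := X
  deg _ := 0
  factor _ := X
  zero := hX
  top := Iso.refl X
  mem := by lia
  strict := by lia
  tri := by lia

/-- The filtration of the middle term `X` of a distinguished triangle `A → X → G → A[1]` obtained
by adding to a filtration of `A` the last factor `G[-d]`, whose degree `d` is smaller than all the
others. -/
def extend {A G : C} (F : HeartFiltration C T A) {d : ℤ}
    (hd : ∀ i, 1 ≤ i → i ≤ F.n → d < F.deg i) (hG : G⟦-d⟧ ∈ heart C T)
    {f : A ⟶ X} {g : X ⟶ G} {h : G ⟶ A⟦(1 : ℤ)⟧}
    (hY : Triangle.mk f g h ∈ distTriang C) : HeartFiltration C T X where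
  n := F.n + 1
  obj i := if i ≤ F.n then F.obj i else X
  deg i := if i ≤ F.n then F.deg i else d
  factor i := if i ≤ F.n then F.factor i else G⟦-d⟧
  zero := by simpa using F.zero
  top := eqToIso (by simp)
  mem i hi _ := by
    split_ifs with hn
    · exact F.mem i hi hn
    · exact hG
  strict i j hi hij hj := by
    rw [if_pos (by lia : i ≤ F.n)]
    split_ifs with hn
    · exact F.strict i j hi hij hn
    · exact hd i hi (by lia)
  tri i hi hi' := by
    by_cases hn : i ≤ F.n
    · rw [if_pos hn, if_pos hn, if_pos hn, if_pos (by lia : i - 1 ≤ F.n)]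
      exact F.tri i hi hn
    · obtain rfl : i = F.n + 1 := by lia
      rw [if_neg hn, if_neg hn, if_neg hn, Nat.add_sub_cancel, if_pos le_rfl]
      have hY' := distinguished_of_iso₁₃ hY F.top ((shiftEquiv C d).counitIso.app G)
      exact ⟨_, _, _, hY'⟩

lemma exists_of_bounds (T : TStr C) (X : C) {a b : ℤ} (hab : a ≤ b)
    (hLE : T.toTStructure_s17.IsLE X (-a)) (hGE : T.toTStructure_s17.IsGE X (1 - b)) :
    ∃ F : HeartFiltration C T X, ∀ i, 1 ≤ i → i ≤ F.n → a ≤ F.deg i ∧ F.deg i < b := by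
  induction a, hab using Int.leInductionDown generalizing X with
  | base =>
    exact ⟨ofIsZero T (T.toTStructure_s17.isZero X (-b) (1 - b)),
      fun i hi hi' => absurd (hi.trans hi' : 1 ≤ 0) (by decide)⟩
  | pred a hab ih =>
    obtain ⟨A, G, hA, hG, f, g, h, hY⟩ :=
      T.toTStructure_s17.exists_triangle X (-a) (-(a - 1)) (by lia)
    have hA : T.toTStructure_s17.IsLE A (-a) := ⟨hA⟩
    have hG : T.toTStructure_s17.IsGE G (-(a - 1)) := ⟨hG⟩
    have hG' : T.toTStructure_s17.IsLE G (-(a - 1)) :=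
      isLE_obj₃_s17 hY _ (T.toTStructure_s17.isLE_of_le A (-a) _) hLE
    have hA' : T.toTStructure_s17.IsGE A (1 - b) :=
      isGE_obj₁_s17 hY _ hGE (T.toTStructure_s17.isGE_of_ge G _ (-(a - 1)))
    obtain ⟨F, hF⟩ := ih A hA hA'
    refine ⟨F.extend (fun i hi hi' => by have := hF i hi hi'; lia) (T.mem_heart_iff.2
      ⟨T.toTStructure_s17.isLE_shift G (-(a - 1)) (-(a - 1)) 0,
        T.toTStructure_s17.isGE_shift G (-(a - 1)) (-(a - 1)) 0⟩)
      hY, fun i hi hi' => ?_⟩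
    dsimp only [extend] at hi' ⊢
    split_ifs with hn
    · have := hF i hi hn
      lia
    · lia

lemma nonempty (T : TStr C) (X : C) : Nonempty (HeartFiltration C T X) := by
  obtain ⟨p, hp⟩ := T.exists_isLE_s17 X
  obtain ⟨q, hq⟩ := T.exists_isGE_s17 X
  obtain ⟨F, -⟩ := exists_of_bounds T X (le_max_left (-p) (1 - q)) (by rwa [neg_neg])
    (T.toTStructure_s17.isGE_of_ge X _ q)
  exact ⟨F⟩

variable (F : HeartFiltration C T X)

section Devissage

variable {Q : ObjectProperty C} [Q.ContainsZero] [Q.IsClosedUnderIsomorphisms]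
  [Q.IsTriangulatedClosed₂]

lemma prop_obj {m : ℕ} (hm : m ≤ F.n)
    (hQ : ∀ i, 1 ≤ i → i ≤ m → Q ((F.factor i)⟦F.deg i⟧)) : Q (F.obj m) := by
  induction m with
  | zero => exact Q.prop_of_isZero F.zero
  | succ m ih =>
    obtain ⟨f, g, h, hY⟩ := F.tri (m + 1) (by lia) hm
    exact Q.ext_of_isTriangulatedClosed₂ _ hY
      (ih (by lia) fun i hi hi' => hQ i hi (by lia)) (hQ _ (by lia) le_rfl)

lemma prop_of_prop_factor (hQ : ∀ i, 1 ≤ i → i ≤ F.n → Q ((F.factor i)⟦F.deg i⟧)) : Q X :=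
  Q.prop_of_iso F.top (F.prop_obj le_rfl hQ)

end Devissage

variable {i : ℕ}

lemma isLE_factor (hi : 1 ≤ i) (hi' : i ≤ F.n) :
    T.toTStructure_s17.IsLE ((F.factor i)⟦F.deg i⟧) (-F.deg i) := by
  have := (T.mem_heart_iff.1 (F.mem i hi hi')).1
  exact T.toTStructure_s17.isLE_shift _ 0 _ _

lemma isGE_factor (hi : 1 ≤ i) (hi' : i ≤ F.n) :
    T.toTStructure_s17.IsGE ((F.factor i)⟦F.deg i⟧) (-F.deg i) := by
  have := (T.mem_heart_iff.1 (F.mem i hi hi')).2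
  exact T.toTStructure_s17.isGE_shift _ 0 _ _

lemma isLE_obj {m : ℕ} (hm : m < F.n) :
    T.toTStructure_s17.IsLE (F.obj m) (-F.deg (m + 1) - 1) := by
  refine ⟨F.prop_obj hm.le fun i hi hi' => ?_⟩
  have := F.isLE_factor hi (by lia)
  have := F.strict i (m + 1) hi (by lia) hm
  exact (T.toTStructure_s17.isLE_of_le _ (-F.deg i) _).le

section Truncation

variable {Q : ObjectProperty C} (hQ : IsStableUnderTruncation T.toTStructure_s17 Q)

include hQ

lemma prop_obj_and_prop_factor_of_prop_obj_succ {m : ℕ} (hm : m < F.n)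
    (hX : Q (F.obj (m + 1))) : Q (F.obj m) ∧ Q ((F.factor (m + 1))⟦F.deg (m + 1)⟧) := by
  obtain ⟨f, g, h, hY⟩ := F.tri (m + 1) (by lia) hm
  refine hQ _ hY (-F.deg (m + 1) - 1) (F.isLE_obj hm) ?_ hX
  rw [sub_add_cancel]
  exact F.isGE_factor (by lia) hm

variable [Q.IsClosedUnderIsomorphisms] (hX : Q X)

include hX

lemma prop_obj_of_prop {m : ℕ} (hm : m ≤ F.n) : Q (F.obj m) := by
  induction hm using Nat.decreasingInduction with
  | self => exact Q.prop_of_iso F.top.symm hX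
  | of_succ m hm ih => exact (F.prop_obj_and_prop_factor_of_prop_obj_succ hQ hm ih).1

lemma prop_factor_of_prop (hi : 1 ≤ i) (hi' : i ≤ F.n) : Q ((F.factor i)⟦F.deg i⟧) := by
  obtain ⟨m, rfl⟩ := Nat.exists_eq_add_of_le' hi
  exact (F.prop_obj_and_prop_factor_of_prop_obj_succ hQ hi' (F.prop_obj_of_prop hQ hX hi')).2

end Truncation

end HeartFiltration

/-! ### The aisle of a forward tilt -/

section Tilt

variable {T T' : TStr C} {X : C} {free tor : Set C} {Q : ObjectProperty C}
  [Q.IsClosedUnderIsomorphisms] [Q.IsTriangulatedClosed₂]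

namespace TStr

variable [Q.ContainsZero]

lemma prop_of_isLE {a : ℤ} (hQ : ∀ M ∈ heart C T, ∀ d, a ≤ d → Q (M⟦d⟧))
    (hX : T.toTStructure_s17.IsLE X (-a)) : Q X := by
  obtain ⟨q, hq⟩ := T.exists_isGE_s17 X
  obtain ⟨F, hF⟩ := HeartFiltration.exists_of_bounds T X (le_max_left a (1 - q)) hX
    (T.toTStructure_s17.isGE_of_ge X _ q)
  exact F.prop_of_prop_factor fun i hi hi' => hQ _ (F.mem i hi hi') _ (hF i hi hi').1

lemma prop_of_isGE {b : ℤ} (hQ : ∀ M ∈ heart C T, ∀ d, d < b → Q (M⟦d⟧))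
    (hX : T.toTStructure_s17.IsGE X (1 - b)) : Q X := by
  obtain ⟨p, hp⟩ := T.exists_isLE_s17 X
  obtain ⟨F, hF⟩ := HeartFiltration.exists_of_bounds T X (min_le_right (-p) b)
    (T.toTStructure_s17.isLE_of_le X p _) hX
  exact F.prop_of_prop_factor fun i hi hi' => hQ _ (F.mem i hi hi') _ (hF i hi hi').2

end TStr

lemma prop_of_mem_tiltSharpSet [Q.ContainsZero]
    (hfree : ∀ M ∈ heart C T, M ∈ free → Q (M⟦(1 : ℤ)⟧))
    (htor : ∀ M ∈ heart C T, M ∈ tor → Q M) (hX : X ∈ tiltSharpSet C T free tor) : Q X := by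
  obtain ⟨F⟩ := HeartFiltration.nonempty T X
  refine F.prop_of_prop_factor fun i hi hi' => ?_
  rcases hX F i hi hi' with hzero | ⟨hdeg, hM⟩ | ⟨hdeg, hM⟩
  · exact Q.prop_of_isZero (Functor.map_isZero _ hzero)
  · rw [hdeg]
    exact hfree _ (F.mem i hi hi') hM
  · exact Q.prop_of_iso ((shiftFunctorZero' C _ hdeg).symm.app _) (htor _ (F.mem i hi hi') hM)

lemma le_neg_one_le_of_heart_eq_tiltSharpSet (h : heart C T' = tiltSharpSet C T free tor) :
    T.toTStructure_s17.le (-1) ≤ T'.toTStructure_s17.le 0 := by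
  have hheart : ∀ M ∈ heart C T', T.toTStructure_s17.ge (-1) M := fun M hM =>
    prop_of_mem_tiltSharpSet
      (fun N hN _ => by
        have := (T.mem_heart_iff.1 hN).2
        exact (T.toTStructure_s17.isGE_shift N 0 1 (-1)).ge)
      (fun N hN _ => by
        have := (T.mem_heart_iff.1 hN).2
        exact (T.toTStructure_s17.isGE_of_ge N (-1) 0).ge)
      (h ▸ hM)
  refine le_le_le_of_ge_le_ge (m' := 1) (n' := 0) (fun X hX => ?_) rfl rfl
  refine TStr.prop_of_isGE (b := 0) (fun M hM d hd => ?_) ⟨hX⟩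
  have : T.toTStructure_s17.IsGE M (-1) := ⟨hheart M hM⟩
  have := T.toTStructure_s17.isGE_shift M (-1) d (-1 - d)
  exact (T.toTStructure_s17.isGE_of_ge _ 0 (-1 - d)).ge

variable (hQ_ge : T.toTStructure_s17.le (-1) ≤ Q) (hQ_le : Q ≤ T.toTStructure_s17.le 0)
  (htor : ∀ M ∈ heart C T, M ∈ tor ↔ Q M)

include hQ_ge hQ_le htor

lemma mem_tiltSharpSet_of_mem_heart (hX : X ∈ heart C T) (hQX : Q X) :
    X ∈ tiltSharpSet C T free tor := by
  intro F i hi hi'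
  have hQF : Q ((F.factor i)⟦F.deg i⟧) :=
    F.prop_factor_of_prop (isStableUnderTruncation_of_le_of_le hQ_ge hQ_le) hQX hi hi'
  have hFLE : T.toTStructure_s17.IsLE ((F.factor i)⟦F.deg i⟧) 0 := ⟨hQ_le _ hQF⟩
  have hFGE : T.toTStructure_s17.IsGE ((F.factor i)⟦F.deg i⟧) 0 :=
    ⟨F.prop_factor_of_prop (isStableUnderTruncation_ge 0) (T.mem_heart_iff.1 hX).2.ge hi hi'⟩
  have hFLE' := F.isLE_factor hi hi'
  have hFGE' := F.isGE_factor hi hi'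
  rcases eq_or_ne (F.deg i) 0 with hdeg | hdeg
  · exact Or.inr (Or.inr ⟨hdeg, (htor _ (F.mem i hi hi')).2
      (Q.prop_of_iso ((shiftFunctorZero' C _ hdeg).app _) hQF)⟩)
  · have hzero : IsZero ((F.factor i)⟦F.deg i⟧) := by
      rcases lt_or_gt_of_ne hdeg with hneg | hpos
      · exact T.toTStructure_s17.isZero _ 0 (-F.deg i)
      · exact T.toTStructure_s17.isZero _ (-F.deg i) 0
    exact Or.inl (.of_full_of_faithful_of_isZero (shiftFunctor C (F.deg i)) _ hzero)

lemma le_zero_le_of_heart_eq_tiltSharpSet (h : heart C T' = tiltSharpSet C T free tor) :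
    T'.toTStructure_s17.le 0 ≤ Q := by
  have := containsZero_of_le_le hQ_ge
  have hheart : ∀ M ∈ heart C T', Q M := fun M hM =>
    prop_of_mem_tiltSharpSet
      (fun N hN _ => by
        have := (T.mem_heart_iff.1 hN).1
        exact hQ_ge _ (T.toTStructure_s17.isLE_shift N 0 1 (-1)).le)
      (fun N hN => (htor N hN).1) (h ▸ hM)
  refine fun X hX => TStr.prop_of_isLE (a := 0) (fun M hM d hd => ?_) ⟨hX⟩
  have hQM := hheart M hM
  rcases hd.eq_or_lt with rfl | hd
  · exact Q.prop_of_iso ((shiftFunctorZero C ℤ).symm.app M) hQM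
  · have : T.toTStructure_s17.IsLE M 0 := ⟨hQ_le _ hQM⟩
    have := T.toTStructure_s17.isLE_shift M 0 d (-d)
    exact hQ_ge _ (T.toTStructure_s17.isLE_of_le _ (-d) _).le

lemma le_zero_eq_of_heart_eq_tiltSharpSet (h : heart C T' = tiltSharpSet C T free tor) :
    T'.toTStructure_s17.le 0 = Q := by
  refine le_antisymm (le_zero_le_of_heart_eq_tiltSharpSet hQ_ge hQ_le htor h) fun X hX => ?_
  have hXLE : T.toTStructure_s17.IsLE X 0 := ⟨hQ_le _ hX⟩
  obtain ⟨A, G, hA, hG, f, g, k, hY⟩ := T.toTStructure_s17.exists_triangle X (-1) 0 rfl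
  have hALE : T.toTStructure_s17.IsLE A (-1) := ⟨hA⟩
  have hALE' := T.toTStructure_s17.isLE_of_le A (-1) 0
  have hGLE : T.toTStructure_s17.IsLE G 0 :=
    isLE_obj₃_s17 hY 0 (T.toTStructure_s17.isLE_of_le A (-1) _) hXLE
  have hGheart : G ∈ heart C T := T.mem_heart_iff.2 ⟨hGLE, ⟨hG⟩⟩
  have hGQ : Q G := prop_obj₃_of_le_neg_one_le hQ_ge hY hALE' hX
  have hGheart' : G ∈ heart C T' :=
    h ▸ mem_tiltSharpSet_of_mem_heart hQ_ge hQ_le htor hGheart hGQ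
  exact (T'.toTStructure_s17.le 0).ext_of_isTriangulatedClosed₂ _ hY
    (le_neg_one_le_of_heart_eq_tiltSharpSet h A hA) (T'.mem_heart_iff.1 hGheart').1.le

end Tilt

/-! ### Tilting at a simple object -/

section Simple

open ObjectProperty

lemma leftOrthogonal_singleton_iff {D : Type*} [Category* D] [HasZeroMorphisms D] (S X : D) :
    (singleton S).leftOrthogonal X ↔ ∀ f : X ⟶ S, f = 0 := by
  refine ⟨fun h f => h f ((singleton_iff S S).2 rfl), fun h Y f hY => ?_⟩
  obtain rfl := (singleton_iff S Y).1 hY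
  exact h f

lemma le_zero_eq_of_heart_eq_simpleSharpSet [HasFiniteBiproducts C] {T T' : TStr C} {S : C}
    (hS : S ∈ heart C T) (h : heart C T' = simpleSharpSet C T S) :
    T'.toTStructure_s17.le 0 = T.toTStructure_s17.le 0 ⊓ (singleton S).leftOrthogonal := by
  have hS' := (T.mem_heart_iff.1 hS).2
  refine le_zero_eq_of_heart_eq_tiltSharpSet (fun X hX => ?_) inf_le_left (fun M hM => ?_) h
  · have hXLE : T.toTStructure_s17.IsLE X (-1) := ⟨hX⟩
    exact ⟨(T.toTStructure_s17.isLE_of_le X (-1) 0).le,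
      (leftOrthogonal_singleton_iff S X).2 fun f => T.toTStructure_s17.zero f (-1) 0⟩
  · exact ⟨fun hM' => ⟨(T.mem_heart_iff.1 hM).1.le, (leftOrthogonal_singleton_iff S M).2 hM'.2⟩,
      fun hM' => ⟨hM, (leftOrthogonal_singleton_iff S M).1 hM'.2⟩⟩

variable {t t₀ t' : Triangulated.TStructure C} {S : C}

lemma isLE_or_isGE_of_isSimpleIn (hS : IsSimpleIn C {X | t.heart X} S) {m n : ℤ}
    (hle : t₀.le m ≤ t.le 0) (hge : t₀.ge n ≤ t.ge 0) (hmn : m + 1 = n) :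
    t₀.IsLE S m ∨ t₀.IsGE S n := by
  obtain ⟨hSheart, -, hSsimple⟩ := hS
  obtain ⟨hSLE, hSGE⟩ := (t.mem_heart_iff S).1 hSheart
  obtain ⟨A, G, hA, hG, f, g, k, hY⟩ := t₀.exists_triangle S m n hmn
  have hALE : t.IsLE A 0 := ⟨hle A hA⟩
  have hGGE : t.IsGE G 0 := ⟨hge G hG⟩
  have hAGE : t.IsGE A 0 := isGE_obj₁_s17 hY 0 hSGE (t.isGE_of_ge G _ 0)
  have hGLE : t.IsLE G 0 := isLE_obj₃_s17 hY 0 (t.isLE_of_le A 0 _) hSLE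
  rcases hSsimple A G f g k ((t.mem_heart_iff A).2 ⟨hALE, hAGE⟩)
    ((t.mem_heart_iff G).2 ⟨hGLE, hGGE⟩) hY with hzero | hzero
  · have : IsIso g := (Triangle.isZero₁_iff_isIso₂ _ hY).1 hzero
    exact Or.inr ⟨(t₀.ge n).prop_of_isIso (inv g) hG⟩
  · have : IsIso f := (Triangle.isZero₃_iff_isIso₁ _ hY).1 hzero
    exact Or.inl ⟨(t₀.le m).prop_of_isIso f hA⟩

lemma le_le_le_inf_leftOrthogonal_iff {m n : ℤ} (hle : t₀.le m ≤ t.le 0)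
    (hmn : m + 1 = n) :
    t₀.le m ≤ t.le 0 ⊓ (singleton S).leftOrthogonal ↔ t₀.IsGE S n := by
  rw [t₀.isGE_iff_orthogonal m n hmn]
  exact ⟨fun h X f hX => (leftOrthogonal_singleton_iff S X).1 (h X hX.le).2 f,
    fun h X hX => ⟨hle X hX, (leftOrthogonal_singleton_iff S X).2 fun f => h X f ⟨hX⟩⟩⟩

theorem tfae_of_isSimpleIn_of_le_zero_eq (hS : IsSimpleIn C {X | t.heart X} S)
    (h₁ : t₀.le 0 ≤ t.le (-1)) (h₂ : t.le (-2) ≤ t₀.le 0)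
    (h' : t'.le 0 = t.le 0 ⊓ (singleton S).leftOrthogonal) :
    List.TFAE [¬ t₀.heart (S⟦(1 : ℤ)⟧), t₀.le 0 ≤ t'.le (-1), t₀.heart (S⟦(2 : ℤ)⟧)] := by
  obtain ⟨hSLE, hSGE⟩ := (t.mem_heart_iff S).1 hS.1
  have hle : t₀.le 1 ≤ t.le 0 := (le_le_shift_iff 1 1 0 0 (-1)).1 h₁
  have hSLE₂ : t₀.IsLE S 2 := ⟨(le_le_shift_iff 2 0 (-2) 2 0).1 h₂ S hSLE.le⟩
  have hSGE₁ : t₀.IsGE S 1 := ⟨ge_le_ge_of_le_le_le h₁ rfl rfl S hSGE.ge⟩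
  have hge : t₀.ge 2 ≤ t.ge 0 :=
    ge_le_ge_of_le_le_le ((le_le_shift_iff 1 (-1) (-2) 1 0).1 h₂) rfl rfl
  rw [heart_shift_iff, heart_shift_iff, and_iff_left hSGE₁, and_iff_right hSLE₂]
  tfae_have 1 → 3 := (isLE_or_isGE_of_isSimpleIn hS hle hge rfl).resolve_left
  tfae_have 3 → 1 := fun _ _ => hS.2.1 (t₀.isZero S 1 2)
  tfae_have 2 ↔ 3 := by
    rw [le_le_shift_iff 1 1 0 0 (-1), h', le_le_le_inf_leftOrthogonal_iff (n := 2) hle rfl]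
  tfae_finish

end Simple

end Development

/-- Let `H`, `H0` be hearts with `H[1] ≤ H0 ≤ H[2]` and `S` a rigid
simple of `H` for which the simple forward tilt `H^♯_S` is defined.  Then the following
are equivalent: (i) `S[1] ∉ H0`; (ii) `H^♯_S[1] ≤ H0`; (iii) `S[2] ∈ H0`. -/
theorem statement_17 [HasFiniteBiproducts C] (T T0 : TStr C)
    (h1 : T0.P ⊆ shiftSet C T.P 1) (h2 : shiftSet C T.P 2 ⊆ T0.P)
    (S : C) (hS : IsSimpleIn C (heart C T) S)
    (hrigid : ∀ f : S ⟶ S⟦(1 : ℤ)⟧, f = 0)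
    (Tsharp : TStr C) (h : heart C Tsharp = simpleSharpSet C T S) :
    List.TFAE [S⟦(1 : ℤ)⟧ ∉ heart C T0,
      T0.P ⊆ shiftSet C Tsharp.P 1,
      S⟦(2 : ℤ)⟧ ∈ heart C T0] := by
  have hsharp := le_zero_eq_of_heart_eq_simpleSharpSet hS.1 h
  rw [TStr.subset_shiftSet_iff] at h1 ⊢
  rw [TStr.shiftSet_subset_iff] at h2
  rw [TStr.heart_eq] at hS ⊢
  exact tfae_of_isSimpleIn_of_le_zero_eq hS h1 h2 hsharp

end Paper
end
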